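/- Let n ≥ 2, Ω = ℝⁿ \ {0}, and y ∈ Ω. Then the quasihyperbolic ball B_k(y,r) is close-to-convex for every r ∈ (0, λ], where λ ≈ 2.97169 is the solution p ∈ (2, π) of cos√(p²−1) + √(p²−1)·sin√(p²−1) = 0. -/

import Mathlib

open Set Metric MeasureTheory

noncomputable section

variable {E : Type*} [NormedAddCommGroup E] [NormedSpace ℝ E]

/-- The quasihyperbolic length of a path `γ` (parametrized on `[0,1]`) in the
domain `Ω`: the integral of `‖γ'(t)‖ / d(γ(t), ∂Ω)`. -/
def qhLength (Ω : Set E) (γ : ℝ → E) : ℝ :=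
  ∫ t in (0:ℝ)..1, ‖deriv γ t‖ / infDist (γ t) (frontier Ω)

/-- A rectifiable curve in `Ω` joining `x` and `y`, formalized as a map on `[0,1]`
which is Lipschitz on `[0,1]` (every rectifiable curve admits such a
parametrization), takes values in `Ω`, and joins `x` to `y`. -/
def IsRectPath (Ω : Set E) (x y : E) (γ : ℝ → E) : Prop :=
  (∃ K : NNReal, LipschitzOnWith K γ (Icc 0 1)) ∧
    MapsTo γ (Icc 0 1) Ω ∧ γ 0 = x ∧ γ 1 = y

/-- The quasihyperbolic metric on `Ω`. -/
def qhDist (Ω : Set E) (x y : E) : ℝ :=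
  sInf (qhLength Ω '' {γ | IsRectPath Ω x y γ})

/-- The quasihyperbolic ball. -/
def qhBall (Ω : Set E) (x : E) (r : ℝ) : Set E :=
  {y ∈ Ω | qhDist Ω x y < r}

/-- The distance ratio metric (`j`-metric) on `Ω`. -/
def jDist (Ω : Set E) (x y : E) : ℝ :=
  Real.log (1 + dist x y / min (infDist x (frontier Ω)) (infDist y (frontier Ω)))

/-- The `j`-metric ball. -/
def jBall (Ω : Set E) (x : E) (r : ℝ) : Set E :=
  {y ∈ Ω | jDist Ω x y < r}

/-- `G` is strictly starlike with respect to `x`: it is starlike with respect to `x`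
and every half-line emanating from `x` meets `∂G` at exactly one point. -/
def StrictlyStarlike (G : Set E) (x : E) : Prop :=
  StarConvex ℝ x G ∧
    ∀ v : E, v ≠ 0 → ∃! p : E, p ∈ frontier G ∧ ∃ t : ℝ, 0 < t ∧ p = x + t • v

/-- `G` is strictly convex: it is strictly starlike with respect to each of its points. -/
def StrictlyConvexSet (G : Set E) : Prop :=
  ∀ x ∈ G, StrictlyStarlike G x

/-- A half-line: `{t • v + z : t > 0}` or `{t • v + z : t ≥ 0}` with `v ≠ 0`. -/
def IsHalfline (L : Set E) : Prop :=
  ∃ z v : E, v ≠ 0 ∧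
    (L = {p | ∃ t : ℝ, 0 < t ∧ p = t • v + z} ∨
      L = {p | ∃ t : ℝ, 0 ≤ t ∧ p = t • v + z})

/-- `G` is close-to-convex: its complement can be covered with pairwise
non-intersecting half-lines. -/
def CloseToConvex (G : Set E) : Prop :=
  ∃ 𝒮 : Set (Set E), (∀ L ∈ 𝒮, IsHalfline L) ∧ 𝒮.PairwiseDisjoint id ∧ Gᶜ = ⋃₀ 𝒮

end

/-!
In the punctured space the quasihyperbolic distance from `x` to `z` is the modulus of the complex
logarithm of `z` relative to `x` in a plane through `0`, `x` and `z`: this modulus grows along a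
path at most as fast as quasihyperbolic length, and logarithmic spirals attain equality.

Slice the ball about `y` by the lines parallel to `y`. If every slice is an interval, its
complement in the line is a union of at most two disjoint half-lines, and the ball is
close-to-convex. Along a line missing `0` the polar angle `θ` is monotone, so a slice may be tested
in `θ`. Outside the sphere `|z| = |y|` it is cut out by a convex function of `θ`. Inside,
normalising `|y| = 1`, the boundary arc of the ball is `θ = r sin u`, `log |z| = -r cos u`, and the
slice is an interval as long as the distance `exp (-r cos u) sin (r sin u)` of the arc from the axis
is increasing in `u`, that is, as long as `r sin u - u ≤ π / 2`. The left-hand side is at most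
`√(r ^ 2 - 1) - arccos (1 / r)` when `1 ≤ r`, and this bound equals `π / 2` at `r = λ`.
-/

section Halflines

variable {E F : Type*} [NormedAddCommGroup E] [NormedSpace ℝ E]
  [NormedAddCommGroup F] [NormedSpace ℝ F]

theorem IsHalfline.image_affineMap {L : Set E} (hL : IsHalfline L) (g : E →ᵃ[ℝ] F)
    (hg : Function.Injective g) : IsHalfline (g '' L) := by
  obtain ⟨z, v, hv, hL⟩ := hL
  have hgv : g.linear v ≠ 0 := by
    simpa only [map_zero] using (g.linear_injective_iff.2 hg).ne hv
  have hmap (t : ℝ) : g (t • v + z) = t • g.linear v + g z := by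
    simpa only [map_smul, vadd_eq_add] using g.map_vadd z (t • v)
  refine ⟨g z, g.linear v, hgv, hL.imp ?_ ?_⟩
  all_goals
    rintro rfl
    ext p
    constructor
    · rintro ⟨_, ⟨t, ht, rfl⟩, rfl⟩
      exact ⟨t, ht, hmap t⟩
    · rintro ⟨t, ht, rfl⟩
      exact ⟨_, ⟨t, ht, rfl⟩, hmap t⟩

theorem isHalfline_Ici (a : ℝ) : IsHalfline (Ici a) := by
  refine ⟨a, 1, one_ne_zero, Or.inr (Set.ext fun p => ⟨fun hp => ?_, ?_⟩)⟩
  · exact ⟨p - a, sub_nonneg.2 hp, by simp⟩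
  · rintro ⟨t, ht, rfl⟩
    simpa using ht

theorem isHalfline_Ioi (a : ℝ) : IsHalfline (Ioi a) := by
  refine ⟨a, 1, one_ne_zero, Or.inl (Set.ext fun p => ⟨fun hp => ?_, ?_⟩)⟩
  · exact ⟨p - a, sub_pos.2 hp, by simp⟩
  · rintro ⟨t, ht, rfl⟩
    simpa using ht

theorem isHalfline_of_isUpperSet {U : Set ℝ} (hU : IsUpperSet U) (hne : U.Nonempty)
    (hbdd : BddBelow U) : IsHalfline U := by
  have hIoi : Ioi (sInf U) ⊆ U := fun p hp =>
    let ⟨_, hx, hxp⟩ := exists_lt_of_csInf_lt hne hp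
    hU hxp.le hx
  by_cases hmem : sInf U ∈ U
  · have : U = Ici (sInf U) :=
      Subset.antisymm (fun p hp => csInf_le hbdd hp) (hU.Ici_subset hmem)
    exact this ▸ isHalfline_Ici _
  · have : U = Ioi (sInf U) := Subset.antisymm
      (fun p hp => (csInf_le hbdd hp).lt_of_ne fun h => hmem (h ▸ hp)) hIoi
    exact this ▸ isHalfline_Ioi _

theorem isHalfline_of_isLowerSet {U : Set ℝ} (hU : IsLowerSet U) (hne : U.Nonempty)
    (hbdd : BddAbove U) : IsHalfline U := by
  have hneg : IsHalfline (-U) := isHalfline_of_isUpperSet hU.neg hne.neg hbdd.neg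
  simpa using hneg.image_affineMap (-LinearMap.id : ℝ →ₗ[ℝ] ℝ).toAffineMap neg_injective

theorem closeToConvex_of_ordConnected {I : Set ℝ} (hI : I.OrdConnected) : CloseToConvex I := by
  obtain ⟨c, hc⟩ : ∃ c : ℝ, I.Nonempty → c ∈ I := by
    by_cases hne : I.Nonempty
    · exact ⟨hne.some, fun _ => hne.some_mem⟩
    · exact ⟨0, fun h => absurd h hne⟩
  have hlower : IsLowerSet (Iᶜ ∩ Iio c) := fun a b hba ha =>
    ⟨fun hb => ha.1 (hI.out hb (hc ⟨b, hb⟩) ⟨hba, ha.2.le⟩), hba.trans_lt ha.2⟩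
  have hupper : IsUpperSet (Iᶜ ∩ Ici c) := fun a b hab ha =>
    ⟨fun hb => ha.1 (hI.out (hc ⟨b, hb⟩) hb ⟨ha.2, hab⟩), le_trans (mem_Ici.1 ha.2) hab⟩
  have hdisj : Disjoint (Iᶜ ∩ Iio c) (Iᶜ ∩ Ici c) :=
    disjoint_left.2 fun _ ha hb => (mem_Iio.1 ha.2).not_ge hb.2
  refine ⟨{L | L.Nonempty ∧ (L = Iᶜ ∩ Iio c ∨ L = Iᶜ ∩ Ici c)}, ?_, ?_, ?_⟩
  · rintro L ⟨hne, rfl | rfl⟩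
    · exact isHalfline_of_isLowerSet hlower hne (bddAbove_Iio.mono inter_subset_right)
    · exact isHalfline_of_isUpperSet hupper hne (bddBelow_Ici.mono inter_subset_right)
  · rintro L ⟨-, rfl | rfl⟩ M ⟨-, rfl | rfl⟩ hne
    exacts [absurd rfl hne, hdisj, hdisj.symm, absurd rfl hne]
  · refine Subset.antisymm (fun x hx => ?_) ?_
    · rcases lt_or_ge x c with h | h
      · exact ⟨Iᶜ ∩ Iio c, ⟨⟨x, hx, h⟩, Or.inl rfl⟩, hx, h⟩
      · exact ⟨Iᶜ ∩ Ici c, ⟨⟨x, hx, h⟩, Or.inr rfl⟩, hx, h⟩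
    · rintro x ⟨L, ⟨-, rfl | rfl⟩, hx⟩ <;> exact hx.1

theorem closeToConvex_of_fibers {G : Set E} (f : E →ₗ[ℝ] ℝ) {e : E} (he : f e ≠ 0)
    (h : ∀ w, f w = 0 → CloseToConvex {x : ℝ | x • e + w ∈ G}) : CloseToConvex G := by
  let line (w : E) : ℝ →ᵃ[ℝ] E :=
    (LinearMap.toSpanSingleton ℝ E e).toAffineMap + AffineMap.const ℝ ℝ w
  have line_apply (w : E) (x : ℝ) : line w x = x • e + w := rfl
  have line_inj {w w' : E} (hw : f w = 0) (hw' : f w' = 0) {x x' : ℝ}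
      (heq : line w x = line w' x') : x = x' ∧ w = w' := by
    rw [line_apply, line_apply] at heq
    have hx : x = x' := by simpa [hw, hw', he] using congrArg f heq
    exact ⟨hx, add_left_cancel (hx ▸ heq)⟩
  choose! 𝒮 hhalf hdisj hcompl using h
  refine ⟨{M | ∃ w, f w = 0 ∧ ∃ L ∈ 𝒮 w, line w '' L = M}, ?_, ?_, ?_⟩
  · rintro _ ⟨w, hw, L, hL, rfl⟩
    exact (hhalf w hw L hL).image_affineMap _ fun _ _ heq => (line_inj hw hw heq).1
  · rintro _ ⟨w, hw, L, hL, rfl⟩ _ ⟨w', hw', L', hL', rfl⟩ hne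
    refine disjoint_left.2 ?_
    rintro _ ⟨x, hx, rfl⟩ ⟨x', hx', heq⟩
    obtain ⟨rfl, rfl⟩ := line_inj hw' hw heq
    have hLL' : L ≠ L' := fun hLL' => hne (by rw [hLL'])
    exact disjoint_left.1 (hdisj w' hw hL hL' hLL') hx hx'
  · have hfiber {w : E} (hw : f w = 0) (x : ℝ) : line w x ∈ Gᶜ ↔ x ∈ ⋃₀ 𝒮 w := by
      rw [← hcompl w hw]
      rfl
    refine Subset.antisymm (fun p hp => ?_) ?_
    · have hw : f (p - (f p / f e) • e) = 0 := by simp [he]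
      have hp' : line (p - (f p / f e) • e) (f p / f e) = p := by simp [line_apply]
      obtain ⟨L, hL, hx⟩ := (hfiber hw (f p / f e)).1 (hp'.symm ▸ hp)
      exact ⟨_, ⟨_, hw, L, hL, rfl⟩, _, hx, hp'⟩
    · rintro _ ⟨_, ⟨w, hw, L, hL, rfl⟩, x, hx, rfl⟩
      exact (hfiber hw x).2 ⟨L, hL, hx⟩

end Halflines

open InnerProductGeometry Module Topology

section PolarLog

variable {V : Type*} [NormedAddCommGroup V] [InnerProductSpace ℝ V]

/-- The logarithm of `z` relative to `x`: when the plane spanned by `x` and `z` is identified with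
`ℂ` so that `x` corresponds to `1` and `z` lies in the closed upper half-plane, this is the
principal logarithm of `z`. Its modulus is the quasihyperbolic distance in the punctured space. -/
noncomputable def polarLog (x z : V) : ℂ :=
  (Real.log ‖z‖ - Real.log ‖x‖ : ℝ) + (angle x z : ℝ) * Complex.I

theorem polarLog_re (x z : V) : (polarLog x z).re = Real.log ‖z‖ - Real.log ‖x‖ := by
  simp [polarLog]

theorem polarLog_im (x z : V) : (polarLog x z).im = angle x z := by
  simp [polarLog]

theorem sq_norm_polarLog (x z : V) :
    ‖polarLog x z‖ ^ 2 = angle x z ^ 2 + (Real.log ‖z‖ - Real.log ‖x‖) ^ 2 := by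
  rw [polarLog, Complex.norm_add_mul_I, Real.sq_sqrt (by positivity), add_comm]

theorem polarLog_self {x : V} (hx : x ≠ 0) : polarLog x x = 0 := by
  simp [polarLog, angle_self hx]

theorem norm_polarLog_comm (x z : V) : ‖polarLog x z‖ = ‖polarLog z x‖ := by
  rw [← sq_eq_sq₀ (norm_nonneg _) (norm_nonneg _), sq_norm_polarLog, sq_norm_polarLog, angle_comm]
  ring

theorem norm_polarLog_le_add (x y z : V) :
    ‖polarLog x z‖ ≤ ‖polarLog x y‖ + ‖polarLog y z‖ := by
  refine le_trans ?_ (norm_add_le _ _)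
  rw [← sq_le_sq₀ (norm_nonneg _) (norm_nonneg _), ← Complex.normSq_eq_norm_sq,
    ← Complex.normSq_eq_norm_sq, Complex.normSq_apply, Complex.normSq_apply]
  simp only [Complex.add_re, Complex.add_im, polarLog_re, polarLog_im, sub_add_sub_cancel']
  gcongr ?_ + ?_
  · exact (by ring : _ = _).le
  · exact mul_self_le_mul_self (angle_nonneg x z) (angle_le_angle_add_angle x y z)

theorem abs_norm_polarLog_sub_le (x y z : V) :
    |‖polarLog x z‖ - ‖polarLog x y‖| ≤ ‖polarLog y z‖ := by
  have h₁ := norm_polarLog_le_add x y z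
  have h₂ := norm_polarLog_le_add x z y
  rw [norm_polarLog_comm z y] at h₂
  exact abs_sub_le_iff.2 ⟨by linarith, by linarith⟩

theorem norm_exp_polarLog {x z : V} (hx : x ≠ 0) (hz : z ≠ 0) :
    ‖Complex.exp (polarLog x z)‖ = ‖z‖ / ‖x‖ := by
  rw [Complex.norm_exp, polarLog_re, Real.exp_sub, Real.exp_log (norm_pos_iff.2 hz),
    Real.exp_log (norm_pos_iff.2 hx)]

theorem re_exp_polarLog {x z : V} (hx : x ≠ 0) (hz : z ≠ 0) :
    (Complex.exp (polarLog x z)).re = inner ℝ x z / ‖x‖ ^ 2 := by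
  have hx' := norm_pos_iff.2 hx
  have hz' := norm_pos_iff.2 hz
  rw [Complex.exp_re, polarLog_re, polarLog_im, Real.exp_sub, Real.exp_log hz', Real.exp_log hx',
    cos_angle]
  field_simp

theorem norm_exp_polarLog_sub_one {x z : V} (hx : x ≠ 0) (hz : z ≠ 0) :
    ‖Complex.exp (polarLog x z) - 1‖ = ‖z - x‖ / ‖x‖ := by
  rw [← sq_eq_sq₀ (norm_nonneg _) (by positivity), div_pow, norm_sub_sq_real z x, real_inner_comm,
    ← Complex.normSq_eq_norm_sq, Complex.normSq_sub, Complex.normSq_eq_norm_sq,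
    norm_exp_polarLog hx hz]
  simp only [map_one, mul_one, re_exp_polarLog hx hz]
  field_simp
  ring

theorem log_exp_polarLog (x z : V) :
    Complex.log (Complex.exp (polarLog x z)) = polarLog x z := by
  apply Complex.log_exp <;> rw [polarLog_im]
  · exact (neg_lt_zero.2 Real.pi_pos).trans_le (angle_nonneg x z)
  · exact angle_le_pi x z

theorem norm_polarLog_le {x z : V} (h : ‖z - x‖ < ‖x‖) :
    ‖polarLog x z‖ ≤ (‖x‖ - ‖z - x‖)⁻¹ * ‖z - x‖ := by
  have hx' : 0 < ‖x‖ := (norm_nonneg _).trans_lt h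
  have hx : x ≠ 0 := norm_pos_iff.1 hx'
  have hz : z ≠ 0 := by
    rintro rfl
    simp at h
  have hρ := norm_exp_polarLog_sub_one hx hz
  have hlt : ‖Complex.exp (polarLog x z) - 1‖ < 1 := hρ ▸ (div_lt_one hx').2 h
  have hlog := Complex.norm_log_one_add_le hlt
  rw [add_sub_cancel, log_exp_polarLog] at hlog
  have hsub : 0 < 1 - ‖Complex.exp (polarLog x z) - 1‖ := sub_pos.2 hlt
  calc ‖polarLog x z‖
      ≤ (1 - ‖Complex.exp (polarLog x z) - 1‖)⁻¹ * ‖Complex.exp (polarLog x z) - 1‖ := by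
        refine hlog.trans ?_
        field_simp
        nlinarith [sq_nonneg ‖Complex.exp (polarLog x z) - 1‖]
    _ = (‖x‖ - ‖z - x‖)⁻¹ * ‖z - x‖ := by
        rw [hρ] at hsub ⊢
        field_simp

theorem locallyLipschitzOn_norm_polarLog (x : V) :
    LocallyLipschitzOn {0}ᶜ (fun z : V => ‖polarLog x z‖) := by
  intro c hc
  have hpos : 0 < ‖c‖ := norm_pos_iff.2 hc
  refine ⟨(‖c‖₊ / 4)⁻¹, ball c (‖c‖ / 4),
    mem_nhdsWithin_of_mem_nhds (ball_mem_nhds _ (by positivity)), ?_⟩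
  refine LipschitzOnWith.of_dist_le_mul fun a ha b hb => ?_
  rw [mem_ball] at ha hb
  have hb' : ‖c‖ - ‖b‖ ≤ dist b c := by
    rw [dist_comm, dist_eq_norm]
    exact norm_sub_norm_le c b
  have hab : ‖a - b‖ ≤ dist a c + dist b c := dist_eq_norm a b ▸ dist_triangle_right a b c
  calc |‖polarLog x a‖ - ‖polarLog x b‖| ≤ ‖polarLog b a‖ := abs_norm_polarLog_sub_le x b a
    _ ≤ (‖b‖ - ‖a - b‖)⁻¹ * ‖a - b‖ := norm_polarLog_le (by linarith)
    _ ≤ (‖c‖ / 4)⁻¹ * ‖a - b‖ := by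
        gcongr
        linarith
    _ = ((‖c‖₊ / 4)⁻¹ : NNReal) * dist a b := by simp [dist_eq_norm]

end PolarLog

section LowerBound

theorem norm_deriv_le_mul_norm_deriv {𝕜 E F : Type*} [NontriviallyNormedField 𝕜]
    [NormedAddCommGroup E] [NormedSpace 𝕜 E] [NormedAddCommGroup F] [NormedSpace 𝕜 F]
    {f : 𝕜 → F} {γ : 𝕜 → E} {g : 𝕜 → ℝ} {t : 𝕜} {C : ℝ}
    (hf : DifferentiableAt 𝕜 f t) (hγ : DifferentiableAt 𝕜 γ t)
    (hg : Filter.Tendsto g (𝓝[≠] t) (𝓝 C))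
    (h : ∀ᶠ s in 𝓝[≠] t, ‖f s - f t‖ ≤ g s * ‖γ s - γ t‖) :
    ‖deriv f t‖ ≤ C * ‖deriv γ t‖ := by
  have hslope_f := (hasDerivAt_iff_tendsto_slope.1 hf.hasDerivAt).norm
  have hslope_γ := (hasDerivAt_iff_tendsto_slope.1 hγ.hasDerivAt).norm
  refine le_of_tendsto_of_tendsto hslope_f (hg.mul hslope_γ) ?_
  filter_upwards [h] with s hs
  rw [slope_def_module, slope_def_module, norm_smul, norm_smul, mul_left_comm]
  gcongr

theorem intervalIntegrable_norm_deriv_of_lipschitzOnWith {E : Type*} [NormedAddCommGroup E]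
    [NormedSpace ℝ E] [CompleteSpace E] {γ : ℝ → E} {K : NNReal} {a b : ℝ} (hab : a ≤ b)
    (hγ : LipschitzOnWith K γ (Icc a b)) :
    IntervalIntegrable (fun t => ‖deriv γ t‖) volume a b := by
  refine (intervalIntegrable_const (c := (K : ℝ))).mono_fun'
    (stronglyMeasurable_deriv γ).norm.aestronglyMeasurable ?_
  rw [uIoc_of_le hab, ← restrict_Ioo_eq_restrict_Ioc]
  filter_upwards [ae_restrict_mem measurableSet_Ioo] with t ht
  simpa only [norm_norm] using norm_deriv_le_of_lipschitzOn (Icc_mem_nhds ht.1 ht.2) hγ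

theorem qhLength_compl_zero {E : Type*} [NormedAddCommGroup E] [NormedSpace ℝ E] [Nontrivial E]
    (γ : ℝ → E) : qhLength {0}ᶜ γ = ∫ t in (0 : ℝ)..1, ‖deriv γ t‖ / ‖γ t‖ := by
  have : Filter.NeBot (𝓝[≠] (0 : E)) := Module.punctured_nhds_neBot ℝ E 0
  have hfrontier : frontier ({0}ᶜ : Set E) = {0} := by
    rw [frontier_compl, frontier, closure_singleton, interior_singleton, sdiff_empty]
  simp only [qhLength, hfrontier, infDist_singleton, dist_zero_right]

variable {V : Type*} [NormedAddCommGroup V] [InnerProductSpace ℝ V]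

theorem norm_deriv_norm_polarLog_le (x : V) {γ : ℝ → V} {t : ℝ} (hne : γ t ≠ 0)
    (hγ : DifferentiableAt ℝ γ t) (hdist : DifferentiableAt ℝ (fun s => ‖polarLog x (γ s)‖) t) :
    ‖deriv (fun s => ‖polarLog x (γ s)‖) t‖ ≤ ‖deriv γ t‖ / ‖γ t‖ := by
  have hsub : Filter.Tendsto (fun s => ‖γ s - γ t‖) (𝓝[≠] t) (𝓝 0) := by
    simpa using ((hγ.continuousAt.tendsto.sub_const (γ t)).norm).mono_left nhdsWithin_le_nhds
  have hfactor : Filter.Tendsto (fun s => (‖γ t‖ - ‖γ s - γ t‖)⁻¹) (𝓝[≠] t) (𝓝 ‖γ t‖⁻¹) := by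
    simpa using (hsub.const_sub ‖γ t‖).inv₀ (by simpa using hne)
  rw [div_eq_inv_mul]
  refine norm_deriv_le_mul_norm_deriv hdist hγ hfactor ?_
  filter_upwards [hsub.eventually_lt_const (norm_pos_iff.2 hne)] with s hs
  exact (abs_norm_polarLog_sub_le x (γ t) (γ s)).trans (norm_polarLog_le hs)

theorem norm_polarLog_le_qhLength [FiniteDimensional ℝ V] {x z : V} {γ : ℝ → V}
    (hγ : IsRectPath {0}ᶜ x z γ) : ‖polarLog x z‖ ≤ qhLength {0}ᶜ γ := by
  obtain ⟨⟨K, hK⟩, hmaps, rfl, rfl⟩ := hγ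
  have h0 : γ 0 ≠ 0 := hmaps ⟨le_rfl, zero_le_one⟩
  have : Nontrivial V := ⟨γ 0, 0, h0⟩
  let ρ : ℝ → ℝ := fun t => ‖polarLog (γ 0) (γ t)‖
  obtain ⟨K', hK'⟩ : ∃ K', LipschitzOnWith K' (fun z => ‖polarLog (γ 0) z‖) (γ '' Icc 0 1) :=
    ((locallyLipschitzOn_norm_polarLog (γ 0)).mono
      hmaps.image_subset).exists_lipschitzOnWith_of_compact (isCompact_Icc.image_of_continuousOn
        hK.continuousOn)
  have hρ : AbsolutelyContinuousOnInterval ρ 0 1 :=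
    LipschitzOnWith.absolutelyContinuousOnInterval (K := K' * K) <| by
      rw [uIcc_of_le zero_le_one]
      exact hK'.comp hK (mapsTo_image γ _)
  have hacγ : AbsolutelyContinuousOnInterval γ 0 1 :=
    LipschitzOnWith.absolutelyContinuousOnInterval (K := K) (by rwa [uIcc_of_le zero_le_one])
  have hint : IntervalIntegrable (fun t => ‖deriv γ t‖ / ‖γ t‖) volume 0 1 := by
    refine (intervalIntegrable_norm_deriv_of_lipschitzOnWith zero_le_one hK).mul_continuousOn ?_
    rw [uIcc_of_le zero_le_one]
    exact hK.continuousOn.norm.inv₀ fun t ht => norm_ne_zero_iff.2 (hmaps ht)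
  have hderiv : ∀ᵐ t, t ∈ Icc (0 : ℝ) 1 → deriv ρ t ≤ ‖deriv γ t‖ / ‖γ t‖ := by
    filter_upwards [hρ.ae_differentiableAt,
      hacγ.boundedVariationOn.ae_differentiableAt_of_mem_uIcc] with t hρt hγt ht
    rw [uIcc_of_le zero_le_one] at hρt hγt
    exact (le_abs_self _).trans (norm_deriv_norm_polarLog_le _ (hmaps ht) (hγt ht) (hρt ht))
  calc ‖polarLog (γ 0) (γ 1)‖ = ρ 1 - ρ 0 := by simp [ρ, polarLog_self h0]
    _ = ∫ t in (0 : ℝ)..1, deriv ρ t := hρ.integral_deriv_eq_sub.symm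
    _ ≤ ∫ t in (0 : ℝ)..1, ‖deriv γ t‖ / ‖γ t‖ :=
        intervalIntegral.integral_mono_ae_restrict zero_le_one hρ.intervalIntegrable_deriv hint
          ((ae_restrict_iff' measurableSet_Icc).2 hderiv)
    _ = qhLength {0}ᶜ γ := (qhLength_compl_zero γ).symm

end LowerBound

section Spiral

variable {V : Type*} [NormedAddCommGroup V] [InnerProductSpace ℝ V]

theorem exists_ne_zero_inner_eq_zero (hdim : 2 ≤ finrank ℝ V) (x : V) :
    ∃ u : V, u ≠ 0 ∧ inner ℝ x u = 0 := by
  have hne : (Submodule.span ℝ {x})ᗮ ≠ ⊥ := by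
    rw [Ne, Submodule.orthogonal_eq_bot_iff]
    intro htop
    have hle := finrank_span_le_card (R := ℝ) ({x} : Set V)
    rw [htop, finrank_top, toFinset_singleton, Finset.card_singleton] at hle
    omega
  obtain ⟨u, hu, hu0⟩ := Submodule.exists_mem_ne_zero_of_ne_bot hne
  exact ⟨u, hu0, Submodule.mem_orthogonal_singleton_iff_inner_right.1 hu⟩

theorem exists_inner_eq_zero_norm_eq_smul (hdim : 2 ≤ finrank ℝ V) {x p : V} (hx : x ≠ 0)
    (hp : inner ℝ x p = 0) :
    ∃ u : V, inner ℝ x u = 0 ∧ ‖u‖ = ‖x‖ ∧ ∃ b : ℝ, 0 ≤ b ∧ p = b • u := by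
  obtain ⟨u, hu, hxu, b, hb, hpb⟩ :
      ∃ u : V, u ≠ 0 ∧ inner ℝ x u = 0 ∧ ∃ b : ℝ, 0 ≤ b ∧ p = b • u := by
    by_cases hp0 : p = 0
    · obtain ⟨u, hu, hxu⟩ := exists_ne_zero_inner_eq_zero hdim x
      exact ⟨u, hu, hxu, 0, le_rfl, by rw [hp0, zero_smul]⟩
    · exact ⟨p, hp0, hp, 1, zero_le_one, (one_smul ℝ p).symm⟩
  have hx' := norm_pos_iff.2 hx
  have hu' := norm_pos_iff.2 hu
  refine ⟨(‖x‖ / ‖u‖) • u, ?_, ?_, b * (‖u‖ / ‖x‖), by positivity, ?_⟩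
  · rw [inner_smul_right, hxu, mul_zero]
  · rw [norm_smul, norm_div, norm_norm, norm_norm, div_mul_cancel₀ _ hu'.ne']
  · rw [smul_smul, mul_assoc, div_mul_div_cancel₀ hx'.ne', div_self hu'.ne', mul_one, hpb]

theorem norm_smul_add_smul_of_inner_eq_zero {x u : V} (hxu : inner ℝ x u = 0) (hu : ‖u‖ = ‖x‖)
    (c : ℂ) : ‖c.re • x + c.im • u‖ = ‖c‖ * ‖x‖ := by
  rw [← sq_eq_sq₀ (norm_nonneg _) (by positivity), norm_add_sq_real, norm_smul, norm_smul,
    real_inner_smul_left, real_inner_smul_right, hxu, hu, mul_pow ‖c‖, Complex.sq_norm,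
    Complex.normSq_apply, Real.norm_eq_abs, Real.norm_eq_abs, mul_pow, mul_pow, sq_abs, sq_abs]
  ring

theorem exists_clm_exp_polarLog (hdim : 2 ≤ finrank ℝ V) {x z : V} (hx : x ≠ 0) (hz : z ≠ 0) :
    ∃ Φ : ℂ →L[ℝ] V, Φ 1 = x ∧ Φ (Complex.exp (polarLog x z)) = z ∧ ∀ c, ‖Φ c‖ = ‖c‖ * ‖x‖ := by
  set a : ℝ := inner ℝ x z / ‖x‖ ^ 2 with ha
  have hp : inner ℝ x (z - a • x) = 0 := by
    rw [inner_sub_right, real_inner_smul_right, real_inner_self_eq_norm_sq, ha]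
    field_simp
    ring
  obtain ⟨u, hxu, hu, b, hb, hzb⟩ := exists_inner_eq_zero_norm_eq_smul hdim hx hp
  have hz_eq : a • x + b • u = z := by rw [← hzb, add_sub_cancel]
  have hnorm := norm_smul_add_smul_of_inner_eq_zero hxu hu
  have hre : (Complex.exp (polarLog x z)).re = a := re_exp_polarLog hx hz
  have him_nonneg : 0 ≤ (Complex.exp (polarLog x z)).im := by
    rw [Complex.exp_im, polarLog_im]
    exact mul_nonneg (Real.exp_pos _).le (sin_angle_nonneg x z)
  have hsq : ‖Complex.exp (polarLog x z)‖ ^ 2 = a ^ 2 + b ^ 2 := by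
    have hab : ‖(⟨a, b⟩ : ℂ)‖ = ‖Complex.exp (polarLog x z)‖ := by
      rw [norm_exp_polarLog hx hz, eq_div_iff (norm_ne_zero_iff.2 hx), ← hnorm, hz_eq]
    rw [← hab, Complex.sq_norm, Complex.normSq_mk]
    ring
  have him : (Complex.exp (polarLog x z)).im = b := by
    rw [← sq_eq_sq₀ him_nonneg hb, ← Complex.sq_norm_sub_sq_re, hsq, hre, add_sub_cancel_left]
  refine ⟨Complex.reCLM.smulRight x + Complex.imCLM.smulRight u, ?_, ?_, hnorm⟩
  · simp
  · simp [hre, him, hz_eq]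

theorem exists_isRectPath_qhLength_eq (hdim : 2 ≤ finrank ℝ V) {x z : V} (hx : x ≠ 0)
    (hz : z ≠ 0) : ∃ γ, IsRectPath {0}ᶜ x z γ ∧ qhLength {0}ᶜ γ = ‖polarLog x z‖ := by
  obtain ⟨Φ, hΦx, hΦz, hΦ⟩ := exists_clm_exp_polarLog hdim hx hz
  let γ : ℝ → V := fun t => Φ (Complex.exp (t * polarLog x z))
  have hne (t : ℝ) : γ t ≠ 0 := by
    rw [← norm_ne_zero_iff, hΦ]
    exact mul_ne_zero (norm_ne_zero_iff.2 (Complex.exp_ne_zero _)) (norm_ne_zero_iff.2 hx)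
  have hderiv (t : ℝ) :
      HasDerivAt γ (Φ (Complex.exp (t * polarLog x z) * polarLog x z)) t := by
    have hlin : HasDerivAt (fun t : ℝ => (t : ℂ) * polarLog x z) (polarLog x z) t := by
      simpa using (hasDerivAt_id (t : ℂ)).comp_ofReal.mul_const (polarLog x z)
    exact Φ.hasFDerivAt.comp_hasDerivAt t hlin.cexp
  have hspeed (t : ℝ) : ‖deriv γ t‖ / ‖γ t‖ = ‖polarLog x z‖ := by
    rw [div_eq_iff (norm_ne_zero_iff.2 (hne t)), (hderiv t).deriv, hΦ, hΦ, norm_mul]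
    ring
  have hlip : ∃ K : NNReal, LipschitzOnWith K γ (Icc 0 1) := by
    have hsmooth : ContDiff ℝ 1 γ := Φ.contDiff.comp
      ((Complex.ofRealCLM.contDiff.mul contDiff_const).cexp)
    exact hsmooth.locallyLipschitz.locallyLipschitzOn.exists_lipschitzOnWith_of_compact
      isCompact_Icc
  have : Nontrivial V := ⟨x, 0, hx⟩
  refine ⟨γ, ⟨hlip, fun t _ => hne t, by simp [γ, hΦx], by simp [γ, hΦz]⟩, ?_⟩
  simp [qhLength_compl_zero, hspeed]

theorem qhDist_compl_zero (hdim : 2 ≤ finrank ℝ V) {x z : V} (hx : x ≠ 0) (hz : z ≠ 0) :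
    qhDist {0}ᶜ x z = ‖polarLog x z‖ := by
  have : FiniteDimensional ℝ V := Module.finite_of_finrank_pos (two_pos.trans_le hdim)
  obtain ⟨γ, hγ, hlen⟩ := exists_isRectPath_qhLength_eq hdim hx hz
  refine IsLeast.csInf_eq ⟨⟨γ, hγ, hlen⟩, ?_⟩
  rintro _ ⟨γ', hγ', rfl⟩
  exact norm_polarLog_le_qhLength hγ'

theorem mem_qhBall_compl_zero_iff (hdim : 2 ≤ finrank ℝ V) {x : V} (hx : x ≠ 0) {r : ℝ}
    (hr : 0 < r) {z : V} :
    z ∈ qhBall {0}ᶜ x r ↔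
      z ≠ 0 ∧ angle x z ^ 2 + (Real.log ‖z‖ - Real.log ‖x‖) ^ 2 < r ^ 2 := by
  refine and_congr_right fun hz => ?_
  rw [qhDist_compl_zero hdim hx hz, ← sq_lt_sq₀ (norm_nonneg _) hr.le, sq_norm_polarLog]

end Spiral

section Trigonometry

open Real

theorem sin_le_sin_add_cos_mul_sub {u v : ℝ} (hu : u ∈ Icc 0 π) (hv : v ∈ Icc 0 π) :
    sin u ≤ sin v + cos v * (u - v) := by
  have hconcave := strictConcaveOn_sin_Icc.concaveOn
  rcases lt_trichotomy u v with huv | rfl | hvu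
  · have h := hconcave.le_slope_of_hasDerivAt hu hv huv (hasDerivAt_sin v)
    rw [slope_def_field, le_div_iff₀ (sub_pos.2 huv)] at h
    linarith
  · simp
  · have h := hconcave.slope_le_of_hasDerivAt hv hu hvu (hasDerivAt_sin v)
    rw [slope_def_field, div_le_iff₀ (sub_pos.2 hvu)] at h
    linarith

theorem sin_arccos_inv {a : ℝ} (ha : 0 < a) : sin (arccos a⁻¹) = √(a ^ 2 - 1) / a := by
  rw [sin_arccos, ← sqrt_sq ha.le, ← sqrt_div' _ (sq_nonneg _), sqrt_sq ha.le, sub_div,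
    div_self (pow_ne_zero 2 ha.ne'), inv_pow, one_div]

theorem cos_arccos_inv {a : ℝ} (ha : 1 ≤ a) : cos (arccos a⁻¹) = a⁻¹ :=
  cos_arccos (neg_one_lt_zero.le.trans (inv_nonneg.2 (zero_le_one.trans ha)))
    (inv_le_one_of_one_le₀ ha)

theorem mul_sin_sub_self_le {a u : ℝ} (ha : 1 ≤ a) (hu : u ∈ Icc 0 π) :
    a * sin u - u ≤ √(a ^ 2 - 1) - arccos a⁻¹ := by
  have ha0 : 0 < a := one_pos.trans_le ha
  have htangent := sin_le_sin_add_cos_mul_sub hu ⟨arccos_nonneg a⁻¹, arccos_le_pi a⁻¹⟩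
  rw [cos_arccos_inv ha, sin_arccos_inv ha0] at htangent
  calc a * sin u - u ≤ a * (√(a ^ 2 - 1) / a + a⁻¹ * (u - arccos a⁻¹)) - u := by gcongr
    _ = √(a ^ 2 - 1) - arccos a⁻¹ := by field_simp; ring

theorem sqrt_sq_sub_one_sub_arccos_inv {a : ℝ} (ha : a ∈ Ioo 2 π)
    (hroot : cos √(a ^ 2 - 1) + √(a ^ 2 - 1) * sin √(a ^ 2 - 1) = 0) :
    √(a ^ 2 - 1) - arccos a⁻¹ = π / 2 := by
  obtain ⟨ha2, haπ⟩ := ha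
  have ha0 : 0 < a := two_pos.trans ha2
  have harccos₀ := arccos_nonneg a⁻¹
  have harccos₁ : arccos a⁻¹ ≤ π / 2 := arccos_le_pi_div_two.2 (inv_nonneg.2 ha0.le)
  have hlower : 1.6 < √(a ^ 2 - 1) := lt_sqrt_of_sq_lt (by nlinarith)
  have hupper : √(a ^ 2 - 1) ≤ π := (sqrt_le_left pi_pos.le).2 (by nlinarith)
  apply injOn_cos ⟨by linarith [pi_lt_d2], by linarith⟩ ⟨by positivity, by linarith [pi_pos]⟩
  rw [cos_pi_div_two, cos_sub, cos_arccos_inv (by linarith), sin_arccos_inv ha0]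
  linear_combination a⁻¹ * hroot

theorem mul_sin_sub_self_le_pi_div_two {lam r u : ℝ} (hlam : lam ∈ Ioo 2 π)
    (hroot : cos √(lam ^ 2 - 1) + √(lam ^ 2 - 1) * sin √(lam ^ 2 - 1) = 0) (hr : r ≤ lam)
    (hu : u ∈ Icc 0 π) : r * sin u - u ≤ π / 2 := by
  calc r * sin u - u ≤ lam * sin u - u := by gcongr; exact sin_nonneg_of_mem_Icc hu
    _ ≤ √(lam ^ 2 - 1) - arccos lam⁻¹ := mul_sin_sub_self_le (by linarith [hlam.1]) hu
    _ = π / 2 := sqrt_sq_sub_one_sub_arccos_inv hlam hroot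

variable {r : ℝ}

/- This is the height `|z| sin θ` along the inner boundary arc `θ = r sin u`, `log |z| = -r cos u`;
its derivative is a positive multiple of `cos (r sin u - u)`. -/
theorem monotoneOn_exp_neg_mul_cos_mul_sin_mul_sin (hr : 0 < r)
    (hbound : ∀ u ∈ Icc 0 (π / 2), r * sin u - u ≤ π / 2) :
    MonotoneOn (fun u => exp (-(r * cos u)) * sin (r * sin u)) (Icc 0 (π / 2)) := by
  have hderiv (u : ℝ) : HasDerivAt (fun u => exp (-(r * cos u)) * sin (r * sin u))
      (exp (-(r * cos u)) * (r * cos (r * sin u - u))) u := by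
    refine ((((hasDerivAt_cos u).const_mul r).neg.exp).mul
      ((hasDerivAt_sin u).const_mul r).sin).congr_deriv ?_
    rw [cos_sub, Pi.neg_apply]
    ring
  refine monotoneOn_of_deriv_nonneg (convex_Icc _ _)
    (fun u _ => (hderiv u).continuousAt.continuousWithinAt)
    (fun u _ => (hderiv u).differentiableAt.differentiableWithinAt) fun u hu => ?_
  obtain ⟨hu₀, hu₁⟩ := interior_subset hu
  have hsin : 0 ≤ sin u := sin_nonneg_of_nonneg_of_le_pi hu₀ (by linarith)
  have hcos : 0 ≤ cos (r * sin u - u) :=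
    cos_nonneg_of_neg_pi_div_two_le_of_le (by nlinarith) (hbound u ⟨hu₀, hu₁⟩)
  rw [(hderiv u).deriv]
  positivity

theorem monotoneOn_exp_neg_sqrt_mul_sin (hr : 0 < r)
    (hbound : ∀ u ∈ Icc 0 (π / 2), r * sin u - u ≤ π / 2) :
    MonotoneOn (fun θ => exp (-√(r ^ 2 - θ ^ 2)) * sin θ) (Icc 0 r) := by
  have harcsin : MapsTo (fun θ => arcsin (θ / r)) (Icc 0 r) (Icc 0 (π / 2)) := fun θ hθ =>
    ⟨arcsin_nonneg.2 (div_nonneg hθ.1 hr.le), arcsin_le_pi_div_two _⟩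
  have hmono : MonotoneOn (fun θ => arcsin (θ / r)) (Icc 0 r) := fun a _ b _ hab =>
    monotone_arcsin (by gcongr)
  refine ((monotoneOn_exp_neg_mul_cos_mul_sin_mul_sin hr hbound).comp hmono harcsin).congr
    fun θ hθ => ?_
  have hsin : r * sin (arcsin (θ / r)) = θ := by
    rw [sin_arcsin (by linarith [div_nonneg hθ.1 hr.le]) ((div_le_one hr).2 hθ.2),
      mul_div_cancel₀ θ hr.ne']
  have hcos : r * cos (arcsin (θ / r)) = √(r ^ 2 - θ ^ 2) := by
    have hsq : r ^ 2 - θ ^ 2 = r ^ 2 * (1 - (θ / r) ^ 2) := by field_simp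
    rw [cos_arcsin, hsq, sqrt_mul (sq_nonneg r), sqrt_sq hr.le]
  simp only [Function.comp_apply, hsin, hcos]

theorem concaveOn_log_sin : ConcaveOn ℝ (Ioo 0 π) fun θ => log (sin θ) := by
  have himage : sin '' Ioo 0 π ⊆ Ioi 0 := image_subset_iff.2 fun θ => sin_pos_of_mem_Ioo
  have hconvex : Convex ℝ (sin '' Ioo 0 π) :=
    (isPreconnected_Ioo.image _ continuous_sin.continuousOn).convex
  exact (strictConcaveOn_log_Ioi.concaveOn.subset himage hconvex).comp
    (strictConcaveOn_sin_Icc.concaveOn.subset Ioo_subset_Icc_self (convex_Ioo _ _))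
    (strictMonoOn_log.monotoneOn.mono himage)

theorem convexOn_sq_add_sq_posPart (k : ℝ) :
    ConvexOn ℝ (Ioo 0 π) fun θ => θ ^ 2 + max (k - log (sin θ)) 0 ^ 2 := by
  have hmax : ConvexOn ℝ (Ioo 0 π) fun θ => max (k - log (sin θ)) 0 :=
    ((convexOn_const k (convex_Ioo 0 π)).sub concaveOn_log_sin).sup
      (convexOn_const 0 (convex_Ioo 0 π))
  exact ((convexOn_id (convex_Ioo 0 π)).pow (fun θ hθ => hθ.1.le) 2).add
    (hmax.pow (fun θ _ => le_max_right _ _) 2)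

theorem ordConnected_setOf_sq_add_sq_sub_log_sin_lt (hr : 0 < r)
    (hbound : ∀ u ∈ Icc 0 (π / 2), r * sin u - u ≤ π / 2) (k : ℝ) :
    {θ ∈ Ioo 0 π | θ ^ 2 + (k - log (sin θ)) ^ 2 < r ^ 2}.OrdConnected := by
  refine ⟨fun a ⟨ha, hra⟩ c ⟨hc, hrc⟩ b hb => ?_⟩
  have hb' : b ∈ Ioo 0 π := ordConnected_Ioo.out ha hc hb
  refine ⟨hb', ?_⟩
  rcases le_or_gt 0 (k - log (sin b)) with houter | hinner
  · have hsq (θ : ℝ) : max (k - log (sin θ)) 0 ^ 2 ≤ (k - log (sin θ)) ^ 2 := by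
      rw [sq_le_sq, abs_of_nonneg (le_max_right _ _)]
      exact max_le (le_abs_self _) (abs_nonneg _)
    have hconvex := (convexOn_sq_add_sq_posPart k).convex_lt (r ^ 2)
    have hmem := hconvex.ordConnected.out ⟨ha, (add_le_add_right (hsq a) _).trans_lt hra⟩
      ⟨hc, (add_le_add_right (hsq c) _).trans_lt hrc⟩ hb
    simpa only [max_eq_left houter] using hmem.2
  · by_contra! hrb
    have hcr : c ≤ r := abs_le_of_sq_le_sq' (by nlinarith) hr.le |>.2
    have hheight := monotoneOn_exp_neg_sqrt_mul_sin hr hbound ⟨hb'.1.le, hb.2.trans hcr⟩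
      ⟨hc.1.le, hcr⟩ hb.2
    have hlog := log_le_log (mul_pos (exp_pos _) (sin_pos_of_mem_Ioo hb')) hheight
    rw [log_mul (exp_pos _).ne' (sin_pos_of_mem_Ioo hb').ne',
      log_mul (exp_pos _).ne' (sin_pos_of_mem_Ioo hc).ne', log_exp, log_exp] at hlog
    have hlower : -√(r ^ 2 - c ^ 2) < k - log (sin c) := neg_sqrt_lt_of_sq_lt (by linarith)
    have hupper : √(r ^ 2 - b ^ 2) ≤ -(k - log (sin b)) :=
      sqrt_le_iff.2 ⟨by linarith, by rw [neg_sq]; linarith⟩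
    linarith

end Trigonometry

section Fibers

variable {V : Type*} [NormedAddCommGroup V] [InnerProductSpace ℝ V] {y w : V}

theorem angle_smul_add_of_inner_eq_zero (hyw : inner ℝ y w = 0) (hw : w ≠ 0) (x : ℝ) :
    angle y (x • y + w) = Real.pi / 2 - Real.arctan (x * ‖y‖ / ‖w‖) := by
  rcases eq_or_ne y 0 with rfl | hy
  · simp
  have hwnorm : ‖w‖ ≠ 0 := norm_ne_zero_iff.2 hw
  have hnorm : ‖x • y + w‖ = ‖w‖ * √(1 + (x * ‖y‖ / ‖w‖) ^ 2) := by
    rw [← sq_eq_sq₀ (norm_nonneg _) (by positivity), norm_add_sq_real, norm_smul, mul_pow, mul_pow,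
      Real.sq_sqrt (by positivity), real_inner_smul_left, hyw, Real.norm_eq_abs, sq_abs]
    field_simp
    ring
  rw [angle, inner_add_right, real_inner_smul_right, real_inner_self_eq_norm_sq, hyw, hnorm,
    Real.arctan_eq_arcsin, ← Real.arccos_eq_pi_div_two_sub_arcsin]
  congr 1
  field_simp
  ring

theorem antitone_angle_smul_add_of_inner_eq_zero (hyw : inner ℝ y w = 0) (hw : w ≠ 0) :
    Antitone fun x : ℝ => angle y (x • y + w) := by
  intro a b hab
  simp only [angle_smul_add_of_inner_eq_zero hyw hw]
  gcongr

theorem angle_smul_add_mem_Ioo_of_inner_eq_zero (hyw : inner ℝ y w = 0) (hw : w ≠ 0) (x : ℝ) :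
    angle y (x • y + w) ∈ Ioo 0 Real.pi := by
  rw [angle_smul_add_of_inner_eq_zero hyw hw]
  have h₁ := Real.arctan_lt_pi_div_two (x * ‖y‖ / ‖w‖)
  have h₂ := Real.neg_pi_div_two_lt_arctan (x * ‖y‖ / ‖w‖)
  exact ⟨by linarith, by linarith⟩

theorem smul_add_ne_zero_of_inner_eq_zero (hyw : inner ℝ y w = 0) (hw : w ≠ 0) (x : ℝ) :
    x • y + w ≠ 0 := by
  intro h
  have hinner := congrArg (inner ℝ w) h
  rw [inner_add_right, real_inner_smul_right, real_inner_comm, hyw, mul_zero, zero_add,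
    inner_zero_right, inner_self_eq_zero] at hinner
  exact hw hinner

theorem sin_angle_mul_norm_smul_add_of_inner_eq_zero (hyw : inner ℝ y w = 0) (x : ℝ) :
    Real.sin (angle y (x • y + w)) * ‖x • y + w‖ = ‖w‖ := by
  rcases eq_or_ne y 0 with rfl | hy
  · simp
  have hgram : inner ℝ y y * inner ℝ (x • y + w) (x • y + w) -
      inner ℝ y (x • y + w) * inner ℝ y (x • y + w) = (‖y‖ * ‖w‖) ^ 2 := by
    simp only [inner_add_left, inner_add_right, real_inner_smul_left, real_inner_smul_right,
      real_inner_comm y w, hyw]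
    simp only [real_inner_self_eq_norm_sq]
    ring
  have hsin := sin_angle_mul_norm_mul_norm y (x • y + w)
  rw [hgram, Real.sqrt_sq (by positivity)] at hsin
  refine mul_left_cancel₀ (norm_ne_zero_iff.2 hy) ?_
  rw [← hsin]
  ring

variable {r : ℝ}

theorem ordConnected_setOf_smul_mem_qhBall (hdim : 2 ≤ finrank ℝ V) (hy : y ≠ 0) (hr : 0 < r)
    (hrπ : r ≤ Real.pi) : {x : ℝ | x • y ∈ qhBall {0}ᶜ y r}.OrdConnected := by
  suffices {x : ℝ | x • y ∈ qhBall {0}ᶜ y r} = Ioo (Real.exp (-r)) (Real.exp r) by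
    rw [this]
    exact ordConnected_Ioo
  ext x
  rw [mem_ofPred_eq, mem_qhBall_compl_zero_iff hdim hy hr]
  rcases lt_trichotomy x 0 with hx | rfl | hx
  · rw [angle_smul_right_of_neg _ _ hx, angle_neg_right, angle_self hy]
    refine iff_of_false (fun h => ?_) fun h => (hx.trans (Real.exp_pos _)).not_gt h.1
    nlinarith [sq_nonneg (Real.log ‖x • y‖ - Real.log ‖y‖), h.2]
  · exact iff_of_false (fun h => h.1 (zero_smul ℝ y)) fun h => (Real.exp_pos _).not_gt h.1
  · rw [angle_smul_right_of_pos _ _ hx, angle_self hy, norm_smul, Real.norm_of_nonneg hx.le,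
      Real.log_mul hx.ne' (norm_ne_zero_iff.2 hy), add_sub_cancel_right, zero_pow two_ne_zero,
      zero_add, sq_lt_sq, abs_of_pos hr, abs_lt, Real.lt_log_iff_exp_lt hx,
      Real.log_lt_iff_lt_exp hx]
    exact and_iff_right (smul_ne_zero hx.ne' hy)

theorem ordConnected_setOf_smul_add_mem_qhBall (hdim : 2 ≤ finrank ℝ V) (hr : 0 < r)
    (hrπ : r ≤ Real.pi)
    (hbound : ∀ u ∈ Icc 0 (Real.pi / 2), r * Real.sin u - u ≤ Real.pi / 2) (hy : y ≠ 0)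
    (hyw : inner ℝ y w = 0) : {x : ℝ | x • y + w ∈ qhBall {0}ᶜ y r}.OrdConnected := by
  rcases eq_or_ne w 0 with rfl | hw
  · simpa only [add_zero] using ordConnected_setOf_smul_mem_qhBall hdim hy hr hrπ
  have hpolar := ordConnected_setOf_sq_add_sq_sub_log_sin_lt hr hbound (Real.log ‖w‖ - Real.log ‖y‖)
  convert hpolar.preimage_anti (antitone_angle_smul_add_of_inner_eq_zero hyw hw) using 1
  ext x
  have hangle := angle_smul_add_mem_Ioo_of_inner_eq_zero hyw hw x
  have hz := smul_add_ne_zero_of_inner_eq_zero hyw hw x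
  have hlog : Real.log ‖w‖ = Real.log (Real.sin (angle y (x • y + w))) + Real.log ‖x • y + w‖ := by
    rw [← sin_angle_mul_norm_smul_add_of_inner_eq_zero hyw x,
      Real.log_mul (Real.sin_pos_of_mem_Ioo hangle).ne' (norm_ne_zero_iff.2 hz)]
  rw [mem_ofPred_eq, mem_qhBall_compl_zero_iff hdim hy hr, mem_preimage, mem_ofPred_eq, hlog,
    and_iff_right hz, and_iff_right hangle]
  ring_nf

end Fibers

theorem qh_ball_punctured_close_to_convex_general {V : Type*} [NormedAddCommGroup V]
    [InnerProductSpace ℝ V] (hdim : 2 ≤ finrank ℝ V) (y : V) (hy : y ≠ 0) (lam : ℝ)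
    (hlammem : lam ∈ Ioo 2 Real.pi)
    (hlameq : Real.cos √(lam ^ 2 - 1) + √(lam ^ 2 - 1) * Real.sin √(lam ^ 2 - 1) = 0)
    (r : ℝ) (hr0 : 0 < r) (hrlam : r ≤ lam) : CloseToConvex (qhBall ({0}ᶜ : Set V) y r) := by
  have hbound : ∀ u ∈ Icc 0 (Real.pi / 2), r * Real.sin u - u ≤ Real.pi / 2 := fun u hu =>
    mul_sin_sub_self_le_pi_div_two hlammem hlameq hrlam
      (Icc_subset_Icc_right (half_le_self Real.pi_pos.le) hu)
  exact closeToConvex_of_fibers (innerSL ℝ y).toLinearMap (inner_self_ne_zero.2 hy) fun w hyw =>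
    closeToConvex_of_ordConnected <| ordConnected_setOf_smul_add_mem_qhBall hdim hr0
      (hrlam.trans hlammem.2.le) hbound hy hyw

/-- in the punctured space, quasihyperbolic balls of radius `r ∈ (0,λ]`
are close-to-convex, where `λ ≈ 2.97169` is the solution `p ∈ (2,π)` of
`cos √(p²-1) + √(p²-1) sin √(p²-1) = 0`. -/
theorem qh_ball_punctured_close_to_convex (n : ℕ) (hn : 2 ≤ n)
    (y : EuclideanSpace ℝ (Fin n)) (hy : y ≠ 0)
    (lam : ℝ) (hlammem : lam ∈ Ioo 2 Real.pi)
    (hlameq : Real.cos (Real.sqrt (lam ^ 2 - 1)) +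
        Real.sqrt (lam ^ 2 - 1) * Real.sin (Real.sqrt (lam ^ 2 - 1)) = 0)
    (r : ℝ) (hr0 : 0 < r) (hrlam : r ≤ lam) :
    CloseToConvex (qhBall ({0}ᶜ : Set (EuclideanSpace ℝ (Fin n))) y r) :=
  qh_ball_punctured_close_to_convex_general (by rwa [finrank_euclideanSpace_fin]) y hy lam hlammem
    hlameq r hr0 hrlam
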